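/- Let (H, β) be a monoidal Hom-Hopf algebra with bijective antipode S and fix an integer n. Then H, equipped with the coaction ρ : H → H^op ⊗ H defined by ρ(h) = β^n(S⁻¹(h_22))·β^{n-1}(h_1) ⊗ β(h_21) (product computed in H), is a left (H^op, β)-Hom-comodule coalgebra, where H^op is H with the opposite multiplication and the same unit, comultiplication, counit and automorphism β. -/

import Mathlib

open TensorProduct

/-! Basic notions of monoidal Hom-algebras, Hom-coalgebras, Hom-bialgebras and
Hom-Hopf algebras over a field `k`, following Caenepeel–Goyvaerts.  All Sweedler-type
identities are expressed via the tensor-product calculus of Mathlib. -/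

/-- A (unital) monoidal Hom-associative algebra `(A, α)`. -/
structure HomAlg (k : Type*) [Field k] (A : Type*) [AddCommGroup A] [Module k A] where
  mul : A →ₗ[k] A →ₗ[k] A
  one : A
  str : A ≃ₗ[k] A
  hom_assoc : ∀ a b c, mul (str a) (mul b c) = mul (mul a b) (str c)
  mul_one : ∀ a, mul a one = str a
  one_mul : ∀ a, mul one a = str a
  str_mul : ∀ a b, str (mul a b) = mul (str a) (str b)
  str_one : str one = one

/-- A (counital) monoidal Hom-coassociative coalgebra `(C, λ)`. -/
structure HomCoalg (k : Type*) [Field k] (C : Type*) [AddCommGroup C] [Module k C] where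
  comul : C →ₗ[k] C ⊗[k] C
  counit : C →ₗ[k] k
  str : C ≃ₗ[k] C
  hom_coassoc : ∀ c,
    TensorProduct.map str.symm.toLinearMap comul (comul c)
      = TensorProduct.assoc k C C C (TensorProduct.map comul str.symm.toLinearMap (comul c))
  counit_comul_right : ∀ c,
    TensorProduct.rid k C (TensorProduct.map LinearMap.id counit (comul c)) = str.symm c
  counit_comul_left : ∀ c,
    TensorProduct.lid k C (TensorProduct.map counit LinearMap.id (comul c)) = str.symm c
  comul_str : ∀ c, comul (str c) = TensorProduct.map str.toLinearMap str.toLinearMap (comul c)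
  counit_str : ∀ c, counit (str c) = counit c

/-- A monoidal Hom-bialgebra `(H, β)`. -/
structure HomBialg (k : Type*) [Field k] (H : Type*) [AddCommGroup H] [Module k H]
    extends HomAlg k H, HomCoalg k H where
  comul_mul : ∀ a b,
    comul (mul a b)
      = TensorProduct.map (TensorProduct.lift mul) (TensorProduct.lift mul)
          (TensorProduct.tensorTensorTensorComm k H H H H (comul a ⊗ₜ[k] comul b))
  comul_one : comul one = one ⊗ₜ[k] one
  counit_mul : ∀ a b, counit (mul a b) = counit a * counit b
  counit_one : counit one = 1

/-- A monoidal Hom-Hopf algebra `(H, β, S)`. -/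
structure HomHopf (k : Type*) [Field k] (H : Type*) [AddCommGroup H] [Module k H]
    extends HomBialg k H where
  S : H →ₗ[k] H
  S_str : ∀ h, str (S h) = S (str h)
  S_mul_left : ∀ h,
    TensorProduct.lift mul (TensorProduct.map S LinearMap.id (comul h)) = counit h • one
  S_mul_right : ∀ h,
    TensorProduct.lift mul (TensorProduct.map LinearMap.id S (comul h)) = counit h • one

section HomDefs

variable {k : Type*} [Field k] {A H M C T : Type*}
  [AddCommGroup A] [Module k A] [AddCommGroup H] [Module k H]
  [AddCommGroup M] [Module k M] [AddCommGroup C] [Module k C]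
  [AddCommGroup T] [Module k T]

/-- `(M, μ)` is a right `(A, α)`-Hom-module via `act`. -/
def IsRightHomModule (AA : HomAlg k A) (μ : M ≃ₗ[k] M) (act : M →ₗ[k] A →ₗ[k] M) : Prop :=
  (∀ m a b, act (act m a) (AA.str b) = act (μ m) (AA.mul a b)) ∧
  (∀ m, act m AA.one = μ m) ∧
  (∀ m a, μ (act m a) = act (μ m) (AA.str a))

/-- The monoidal Hom-algebra `(HM, β)` is a right `(A, α)`-Hom-module algebra via `act`. -/
def IsRightHomModuleAlg (AA : HomBialg k A) (HM : HomAlg k H)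
    (act : H →ₗ[k] A →ₗ[k] H) : Prop :=
  IsRightHomModule AA.toHomAlg HM.str act ∧
  (∀ h g a, act (HM.mul h g) a
      = TensorProduct.lift HM.mul (TensorProduct.map (act h) (act g) (AA.comul a))) ∧
  (∀ a, act HM.one a = AA.counit a • HM.one)

/-- `(M, μ)` is a left `(H, β)`-Hom-module via `act`. -/
def IsLeftHomModule (HHa : HomAlg k H) (μ : M ≃ₗ[k] M) (act : H →ₗ[k] M →ₗ[k] M) : Prop :=
  (∀ h g m, act (HHa.str h) (act g m) = act (HHa.mul h g) (μ m)) ∧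
  (∀ m, act HHa.one m = μ m) ∧
  (∀ h m, μ (act h m) = act (HHa.str h) (μ m))

/-- The monoidal Hom-algebra `(AM, α)` is a left `(H, β)`-Hom-module algebra via `act`. -/
def IsLeftHomModuleAlg (HB : HomBialg k H) (AM : HomAlg k A)
    (act : H →ₗ[k] A →ₗ[k] A) : Prop :=
  IsLeftHomModule HB.toHomAlg AM.str act ∧
  (∀ h a b, act h (AM.mul a b)
      = TensorProduct.lift AM.mul
          (TensorProduct.map (act.flip a) (act.flip b) (HB.comul h))) ∧
  (∀ h, act h AM.one = HB.counit h • AM.one)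

/-- `(M, μ)` is a left `(H, β)`-Hom-comodule via `ρ`. -/
def IsLeftHomComodule (HC : HomCoalg k H) (μ : M ≃ₗ[k] M) (ρ : M →ₗ[k] H ⊗[k] M) : Prop :=
  (∀ m, TensorProduct.map HC.str.symm.toLinearMap ρ (ρ m)
      = TensorProduct.assoc k H H M
          (TensorProduct.map HC.comul μ.symm.toLinearMap (ρ m))) ∧
  (∀ m, ρ (μ m) = TensorProduct.map HC.str.toLinearMap μ.toLinearMap (ρ m)) ∧
  (∀ m, TensorProduct.lid k M (TensorProduct.map HC.counit LinearMap.id (ρ m)) = μ.symm m)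

/-- The monoidal Hom-coalgebra `(CC, λ)` is a left `(H, β)`-Hom-comodule coalgebra via `ρ`. -/
def IsLeftHomComoduleCoalg (HB : HomBialg k H) (CC : HomCoalg k C)
    (ρ : C →ₗ[k] H ⊗[k] C) : Prop :=
  IsLeftHomComodule HB.toHomCoalg CC.str ρ ∧
  (∀ c, TensorProduct.map LinearMap.id CC.comul (ρ c)
      = TensorProduct.map (TensorProduct.lift HB.mul) LinearMap.id
          (TensorProduct.tensorTensorTensorComm k H C H C
            (TensorProduct.map ρ ρ (CC.comul c)))) ∧
  (∀ c, TensorProduct.rid k H (TensorProduct.map LinearMap.id CC.counit (ρ c))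
      = CC.counit c • HB.one)

/-- The monoidal Hom-algebra `(AM, α)` is a left `(H, β)`-Hom-comodule algebra via `ρ`. -/
def IsLeftHomComoduleAlg (HB : HomBialg k H) (AM : HomAlg k A)
    (ρ : A →ₗ[k] H ⊗[k] A) : Prop :=
  IsLeftHomComodule HB.toHomCoalg AM.str ρ ∧
  (∀ a b, ρ (AM.mul a b)
      = TensorProduct.map (TensorProduct.lift HB.mul) (TensorProduct.lift AM.mul)
          (TensorProduct.tensorTensorTensorComm k H A H A (ρ a ⊗ₜ[k] ρ b))) ∧
  ρ AM.one = HB.one ⊗ₜ[k] AM.one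

/-- `(M, μ)` is a right `(C, λ)`-Hom-comodule via `ρ`. -/
def IsRightHomComodule (CC : HomCoalg k C) (μ : M ≃ₗ[k] M) (ρ : M →ₗ[k] M ⊗[k] C) : Prop :=
  (∀ m, TensorProduct.map μ.symm.toLinearMap CC.comul (ρ m)
      = TensorProduct.assoc k M C C
          (TensorProduct.map ρ CC.str.symm.toLinearMap (ρ m))) ∧
  (∀ m, ρ (μ m) = TensorProduct.map μ.toLinearMap CC.str.toLinearMap (ρ m)) ∧
  (∀ m, TensorProduct.rid k M (TensorProduct.map LinearMap.id CC.counit (ρ m)) = μ.symm m)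

/-- The monoidal Hom-coalgebra `(CC, λ)` is a right `(A, α)`-Hom-comodule coalgebra via `ρ`. -/
def IsRightHomComoduleCoalg (AB : HomBialg k A) (CC : HomCoalg k C)
    (ρ : C →ₗ[k] C ⊗[k] A) : Prop :=
  IsRightHomComodule AB.toHomCoalg CC.str ρ ∧
  (∀ c, TensorProduct.map CC.comul LinearMap.id (ρ c)
      = TensorProduct.map LinearMap.id (TensorProduct.lift AB.mul)
          (TensorProduct.tensorTensorTensorComm k C A C A
            (TensorProduct.map ρ ρ (CC.comul c)))) ∧
  (∀ c, TensorProduct.lid k A (TensorProduct.map CC.counit LinearMap.id (ρ c))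
      = CC.counit c • AB.one)

/-- The monoidal Hom-algebra `(MM, μ)` is a right `(A, α)`-Hom-comodule algebra via `ρ`. -/
def IsRightHomComoduleAlg (AB : HomBialg k A) (MM : HomAlg k M)
    (ρ : M →ₗ[k] M ⊗[k] A) : Prop :=
  IsRightHomComodule AB.toHomCoalg MM.str ρ ∧
  (∀ m n, ρ (MM.mul m n)
      = TensorProduct.map (TensorProduct.lift MM.mul) (TensorProduct.lift AB.mul)
          (TensorProduct.tensorTensorTensorComm k M A M A (ρ m ⊗ₜ[k] ρ n))) ∧
  ρ MM.one = MM.one ⊗ₜ[k] AB.one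

/-- A matched copair `(A, H)` of monoidal Hom-bialgebras:
`A` is a left `H`-Hom-comodule algebra via `ρA : A → H ⊗ A`, `H` is a right
`A`-Hom-comodule algebra via `ρH : H → H ⊗ A`, subject to conditions (4.1)–(4.5). -/
def IsMatchedCopair (AB : HomBialg k A) (HB : HomBialg k H)
    (ρA : A →ₗ[k] H ⊗[k] A) (ρH : H →ₗ[k] H ⊗[k] A) : Prop :=
  IsLeftHomComoduleAlg HB AB.toHomAlg ρA ∧
  IsRightHomComoduleAlg AB HB.toHomAlg ρH ∧
  -- (4.1)
  (∀ a, TensorProduct.rid k H (TensorProduct.map LinearMap.id AB.counit (ρA a))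
      = AB.counit a • HB.one) ∧
  -- (4.2)
  (∀ a, TensorProduct.map LinearMap.id AB.comul (ρA a)
      = TensorProduct.map
          (TensorProduct.lift HB.mul ∘ₗ TensorProduct.map LinearMap.id HB.str.toLinearMap)
          ((TensorProduct.map
              (TensorProduct.lift AB.mul ∘ₗ TensorProduct.map AB.str.symm.toLinearMap LinearMap.id)
              LinearMap.id) ∘ₗ (TensorProduct.assoc k A A A).symm.toLinearMap)
          (TensorProduct.tensorTensorTensorComm k H A H (A ⊗[k] A)
            (TensorProduct.map LinearMap.id (TensorProduct.assoc k H A A).toLinearMap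
              (TensorProduct.map LinearMap.id (TensorProduct.map ρH LinearMap.id)
                (TensorProduct.map ρA ρA (AB.comul a)))))) ∧
  -- (4.3)
  (∀ h, TensorProduct.lid k A (TensorProduct.map HB.counit LinearMap.id (ρH h))
      = HB.counit h • AB.one) ∧
  -- (4.4)
  (∀ h, TensorProduct.map HB.comul LinearMap.id (ρH h)
      = TensorProduct.map
          ((TensorProduct.map LinearMap.id
              (TensorProduct.lift HB.mul ∘ₗ TensorProduct.map LinearMap.id HB.str.symm.toLinearMap))
            ∘ₗ (TensorProduct.assoc k H H H).toLinearMap)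
          (TensorProduct.lift AB.mul ∘ₗ TensorProduct.map AB.str.toLinearMap LinearMap.id)
          (TensorProduct.tensorTensorTensorComm k (H ⊗[k] H) A H A
            (TensorProduct.map (TensorProduct.assoc k H H A).symm.toLinearMap LinearMap.id
              (TensorProduct.map (TensorProduct.map LinearMap.id ρA) LinearMap.id
                (TensorProduct.map ρH ρH (HB.comul h)))))) ∧
  -- (4.5)
  (∀ h a, TensorProduct.map (TensorProduct.lift HB.mul) (TensorProduct.lift AB.mul)
        (TensorProduct.tensorTensorTensorComm k H A H A (ρH h ⊗ₜ[k] ρA a))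
      = TensorProduct.map (TensorProduct.lift HB.mul) (TensorProduct.lift AB.mul)
          (TensorProduct.tensorTensorTensorComm k H A H A (ρA a ⊗ₜ[k] ρH h)))

/-- A coquasitriangular structure `ζ` (with convolution inverse `ζi`) on a monoidal
Hom-bialgebra `P`; conditions (5.1)–(5.4). -/
def IsCoquasitriangular (P : HomBialg k T) (ζ ζi : T →ₗ[k] T →ₗ[k] k) : Prop :=
  -- convolution invertibility
  (∀ h g, TensorProduct.lid k k
      (TensorProduct.map (TensorProduct.lift ζ) (TensorProduct.lift ζi)
        (TensorProduct.tensorTensorTensorComm k T T T T (P.comul h ⊗ₜ[k] P.comul g)))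
      = P.counit h * P.counit g) ∧
  (∀ h g, TensorProduct.lid k k
      (TensorProduct.map (TensorProduct.lift ζi) (TensorProduct.lift ζ)
        (TensorProduct.tensorTensorTensorComm k T T T T (P.comul h ⊗ₜ[k] P.comul g)))
      = P.counit h * P.counit g) ∧
  -- (5.1)
  (∀ h g, ζ (P.str h) (P.str g) = ζ h g) ∧
  -- (5.2)
  (∀ h g, TensorProduct.lid k T
      (TensorProduct.map (TensorProduct.lift ζ)
        (TensorProduct.lift P.mul ∘ₗ (TensorProduct.comm k T T).toLinearMap)
        (TensorProduct.tensorTensorTensorComm k T T T T (P.comul h ⊗ₜ[k] P.comul g)))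
      = TensorProduct.rid k T
          (TensorProduct.map (TensorProduct.lift P.mul) (TensorProduct.lift ζ)
            (TensorProduct.tensorTensorTensorComm k T T T T (P.comul h ⊗ₜ[k] P.comul g)))) ∧
  -- (5.3)
  (∀ h g c, ζ (P.str.symm h) (P.mul g c)
      = TensorProduct.lid k k
          (TensorProduct.map (ζ.flip (P.str g)) (ζ.flip (P.str c)) (P.comul h))) ∧
  -- (5.4)
  (∀ h g c, ζ (P.mul h g) (P.str.symm c)
      = TensorProduct.lid k k
          (TensorProduct.map (ζ (P.str h)) (ζ (P.str g))
            ((TensorProduct.comm k T T) (P.comul c))))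

/-- `σ` is a left monoidal Hom-2-cocycle on the monoidal Hom-bialgebra `P`. -/
def IsLeftHom2Cocycle (P : HomBialg k T) (σ : T →ₗ[k] T →ₗ[k] k) : Prop :=
  (∀ h g, σ (P.str h) (P.str g) = σ h g) ∧
  (∀ h g c, TensorProduct.lid k k
      (TensorProduct.map (TensorProduct.lift σ) (σ.flip c ∘ₗ TensorProduct.lift P.mul)
        (TensorProduct.tensorTensorTensorComm k T T T T (P.comul h ⊗ₜ[k] P.comul g)))
      = TensorProduct.lid k k
          (TensorProduct.map (TensorProduct.lift σ) (σ h ∘ₗ TensorProduct.lift P.mul)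
            (TensorProduct.tensorTensorTensorComm k T T T T (P.comul g ⊗ₜ[k] P.comul c))))

/-- `σ` is a right monoidal Hom-2-cocycle on the monoidal Hom-bialgebra `P`. -/
def IsRightHom2Cocycle (P : HomBialg k T) (σ : T →ₗ[k] T →ₗ[k] k) : Prop :=
  (∀ h g, σ (P.str h) (P.str g) = σ h g) ∧
  (∀ h g c, TensorProduct.lid k k
      (TensorProduct.map (σ.flip c ∘ₗ TensorProduct.lift P.mul) (TensorProduct.lift σ)
        (TensorProduct.tensorTensorTensorComm k T T T T (P.comul h ⊗ₜ[k] P.comul g)))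
      = TensorProduct.lid k k
          (TensorProduct.map (σ h ∘ₗ TensorProduct.lift P.mul) (TensorProduct.lift σ)
            (TensorProduct.tensorTensorTensorComm k T T T T (P.comul g ⊗ₜ[k] P.comul c))))

/-- Normality of a 2-cocycle: `σ(1, h) = σ(h, 1) = ε(h)`. -/
def IsNormal2Cocycle (P : HomBialg k T) (σ : T →ₗ[k] T →ₗ[k] k) : Prop :=
  (∀ h, σ P.one h = P.counit h) ∧ (∀ h, σ h P.one = P.counit h)

/-- The left-twisted product `h ·_σ g = σ(h₁, g₁) β(h₂ g₂)`. -/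
noncomputable def leftTwistMul (P : HomBialg k T) (σ : T →ₗ[k] T →ₗ[k] k) (h g : T) : T :=
  TensorProduct.lid k T
    (TensorProduct.map (TensorProduct.lift σ) (P.str.toLinearMap ∘ₗ TensorProduct.lift P.mul)
      (TensorProduct.tensorTensorTensorComm k T T T T (P.comul h ⊗ₜ[k] P.comul g)))

/-- The right-twisted product `h ·_σ g = β(h₁ g₁) σ(h₂, g₂)`. -/
noncomputable def rightTwistMul (P : HomBialg k T) (σ : T →ₗ[k] T →ₗ[k] k) (h g : T) : T :=
  TensorProduct.rid k T
    (TensorProduct.map (P.str.toLinearMap ∘ₗ TensorProduct.lift P.mul) (TensorProduct.lift σ)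
      (TensorProduct.tensorTensorTensorComm k T T T T (P.comul h ⊗ₜ[k] P.comul g)))

/-- The convolution product on the linear dual of a monoidal Hom-coalgebra:
`(u • v)(h) = u(h₁) v(h₂)`. -/
noncomputable def convD (CC : HomCoalg k H) (u v : Module.Dual k H) : Module.Dual k H :=
  (TensorProduct.lid k k).toLinearMap ∘ₗ TensorProduct.map u v ∘ₗ CC.comul

end HomDefs

/-! Replacing the product by `β⁻¹(ab)` and the coproduct by `Δ(β(h))` turns the opposite
Hom-Hopf algebra, whose antipode is `S⁻¹`, into an ordinary Hopf algebra `A`. There the coaction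
becomes the adjoint coaction `ad(a) = a₁ S(a₂₂) ⊗ a₂₁`, which in the convolution algebra
`Hom(A, A ⊗ A)` is the conjugate of `a ↦ 1 ⊗ a` by the unit `a ↦ a ⊗ 1`. Coassociativity says that
conjugating by a product of units is conjugating twice, and compatibility with `Δ` and `ε` that
conjugation is multiplicative and fixes the unit. Finally `ad` commutes with Hopf algebra
automorphisms, in particular with the powers of `β`, so the Hom-twist can be put back. -/

section AdjointCoaction

open Coalgebra HopfAlgebra WithConv ConjAct
open Algebra.TensorProduct (includeLeft includeRight)

variable {R A B C : Type*} [CommSemiring R] [Semiring A] [HopfAlgebra R A]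
  [Semiring B] [Algebra R B] [Semiring C] [Algebra R C]

/-- Postcomposition with an algebra map, as a homomorphism of convolution monoids. -/
def convPostcomp {D : Type*} [AddCommMonoid D] [Module R D] [Coalgebra R D] (f : B →ₐ[R] C) :
    WithConv (D →ₗ[R] B) →* WithConv (D →ₗ[R] C) where
  toFun g := toConv (f.toLinearMap ∘ₗ g.ofConv)
  map_one' := by ext; simp
  map_mul' g h := congrArg toConv (LinearMap.algHom_comp_convMul_distrib f g h)

/-- Precomposition with a coalgebra map, as a homomorphism of convolution monoids. -/
def convPrecomp {D E : Type*} [AddCommMonoid D] [Module R D] [Coalgebra R D]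
    [AddCommMonoid E] [Module R E] [Coalgebra R E] (f : D →ₗc[R] E) :
    WithConv (E →ₗ[R] B) →* WithConv (D →ₗ[R] B) where
  toFun g := toConv (g.ofConv ∘ₗ f.toLinearMap)
  map_one' := by ext; simp
  map_mul' g h := congrArg toConv (LinearMap.convMul_comp_coalgHom_distrib g h f)

/-- An algebra map `f` out of a Hopf algebra, as a unit of the convolution algebra; its inverse is
`f ∘ S`. -/
def convUnit (f : A →ₐ[R] B) : (WithConv (A →ₗ[R] B))ˣ where
  val := toConv f.toLinearMap
  inv := toConv (f.toLinearMap ∘ₗ antipode R)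
  val_inv := by
    simpa only [map_mul, map_one] using!
      congrArg (convPostcomp f) (LinearMap.id_mul_antipode (R := R) (C := A))
  inv_val := by
    simpa only [map_mul, map_one] using!
      congrArg (convPostcomp f) (LinearMap.antipode_mul_id (R := R) (C := A))

theorem convUnit_smul_def (f : A →ₐ[R] B) (g : WithConv (A →ₗ[R] B)) :
    toConjAct (convUnit f) • g =
      toConv f.toLinearMap * g * toConv (f.toLinearMap ∘ₗ antipode R) := rfl

theorem convPostcomp_convUnit_smul (h : B →ₐ[R] C) (f : A →ₐ[R] B) (g : WithConv (A →ₗ[R] B)) :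
    convPostcomp h (toConjAct (convUnit f) • g) =
      toConjAct (convUnit (h.comp f)) • convPostcomp h g := by
  simp only [convUnit_smul_def, map_mul]
  rfl

variable (R A) in
/-- The adjoint coaction `a ↦ a₁ S(a₂₂) ⊗ a₂₁` of a Hopf algebra on itself. -/
noncomputable def adCoaction : A →ₗ[R] A ⊗[R] A :=
  TensorProduct.map (LinearMap.mul' R A ∘ₗ TensorProduct.map LinearMap.id (antipode R))
      LinearMap.id ∘ₗ
    (TensorProduct.assoc R A A A).symm.toLinearMap ∘ₗ
    TensorProduct.map LinearMap.id (TensorProduct.comm R A A).toLinearMap ∘ₗ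
    TensorProduct.map LinearMap.id comul ∘ₗ comul

theorem toConv_map_comp_adCoaction (f : A →ₐ[R] B) (g : A →ₗ[R] C) :
    toConv (TensorProduct.map f.toLinearMap g ∘ₗ adCoaction R A) =
      toConjAct (convUnit ((includeLeft : B →ₐ[R] B ⊗[R] C).comp f)) •
        toConv ((includeRight : C →ₐ[R] B ⊗[R] C).toLinearMap ∘ₗ g) := by
  have on_tensors : TensorProduct.map f.toLinearMap g ∘ₗ
      TensorProduct.map (LinearMap.mul' R A ∘ₗ TensorProduct.map LinearMap.id (antipode R))
        LinearMap.id ∘ₗ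
      (TensorProduct.assoc R A A A).symm.toLinearMap ∘ₗ
      TensorProduct.map LinearMap.id (TensorProduct.comm R A A).toLinearMap =
      LinearMap.mul' R (B ⊗[R] C) ∘ₗ
        TensorProduct.map ((includeLeft : B →ₐ[R] B ⊗[R] C).comp f).toLinearMap
          (LinearMap.mul' R (B ⊗[R] C) ∘ₗ
            TensorProduct.map ((includeRight : C →ₐ[R] B ⊗[R] C).toLinearMap ∘ₗ g)
              (((includeLeft : B →ₐ[R] B ⊗[R] C).comp f).toLinearMap ∘ₗ antipode R)) := by
    ext a b c
    simp
  ext a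
  have at_comul := LinearMap.congr_fun on_tensors (TensorProduct.map LinearMap.id comul (comul a))
  rw [convUnit_smul_def, mul_assoc]
  refine at_comul.trans ?_
  simp only [LinearMap.comp_apply, TensorProduct.map_map]
  rfl

theorem toConv_map_id_comp_adCoaction (g : A →ₗ[R] C) :
    toConv (TensorProduct.map LinearMap.id g ∘ₗ adCoaction R A) =
      toConjAct (convUnit (includeLeft : A →ₐ[R] A ⊗[R] C)) •
        toConv ((includeRight : C →ₐ[R] A ⊗[R] C).toLinearMap ∘ₗ g) :=
  toConv_map_comp_adCoaction (AlgHom.id R A) g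

theorem toConv_adCoaction :
    toConv (adCoaction R A) =
      toConjAct (convUnit (includeLeft : A →ₐ[R] A ⊗[R] A)) •
        toConv (includeRight : A →ₐ[R] A ⊗[R] A).toLinearMap := by
  simpa only [TensorProduct.map_id, LinearMap.id_comp, LinearMap.comp_id] using
    toConv_map_id_comp_adCoaction (R := R) (A := A) LinearMap.id

/-- This is `a₁ ⊗ a₂ ⊗ 1 = (a₁ ⊗ 1 ⊗ 1)(1 ⊗ a₂ ⊗ 1)`. -/
theorem convUnit_assoc_includeLeft_comul :
    convUnit (((Algebra.TensorProduct.assoc R R R A A A).toAlgHom.comp includeLeft).comp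
        (Bialgebra.comulAlgHom R A)) =
      convUnit includeLeft * convUnit ((includeRight : A ⊗[R] A →ₐ[R] _).comp includeLeft) := by
  have on_tensors : ((Algebra.TensorProduct.assoc R R R A A A).toAlgHom.comp
        (includeLeft : _ →ₐ[R] (A ⊗[R] A) ⊗[R] A)).toLinearMap =
      LinearMap.mul' R (A ⊗[R] (A ⊗[R] A)) ∘ₗ
        TensorProduct.map (includeLeft : A →ₐ[R] A ⊗[R] (A ⊗[R] A)).toLinearMap
          ((includeRight : A ⊗[R] A →ₐ[R] _).comp includeLeft).toLinearMap := by
    ext a b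
    simp
  exact Units.ext (congrArg (fun f => toConv (f ∘ₗ comul)) on_tensors)

theorem adCoaction_coassoc :
    TensorProduct.map LinearMap.id (adCoaction R A) ∘ₗ adCoaction R A =
      (TensorProduct.assoc R A A A).toLinearMap ∘ₗ
        TensorProduct.map comul LinearMap.id ∘ₗ adCoaction R A := by
  let α := (Algebra.TensorProduct.assoc R R R A A A).toAlgHom
  let ι : A ⊗[R] A →ₐ[R] A ⊗[R] (A ⊗[R] A) := includeRight
  have iterate : convPostcomp ι (toConv (adCoaction R A)) =
      toConjAct (convUnit (ι.comp includeLeft)) • toConv (ι.comp includeRight).toLinearMap := by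
    rw [toConv_adCoaction, convPostcomp_convUnit_smul]
    rfl
  have split : convPostcomp α
      (toConv (TensorProduct.map comul LinearMap.id ∘ₗ adCoaction R A)) =
      toConjAct (convUnit includeLeft * convUnit (ι.comp includeLeft)) •
        toConv (ι.comp includeRight).toLinearMap := by
    rw [← convUnit_assoc_includeLeft_comul]
    refine (congrArg (convPostcomp α)
      (toConv_map_comp_adCoaction (Bialgebra.comulAlgHom R A) LinearMap.id)).trans ?_
    rw [convPostcomp_convUnit_smul]
    congr 1
  refine toConv_injective ((toConv_map_id_comp_adCoaction _).trans (.trans ?_ split.symm))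
  rw [toConjAct_mul, mul_smul, ← iterate]
  rfl

theorem map_id_comul_comp_adCoaction :
    TensorProduct.map LinearMap.id comul ∘ₗ adCoaction R A =
      TensorProduct.map (LinearMap.mul' R A) LinearMap.id ∘ₗ
        (TensorProduct.tensorTensorTensorComm R A A A A).toLinearMap ∘ₗ
        TensorProduct.map (adCoaction R A) (adCoaction R A) ∘ₗ comul := by
  let ι₁ : A →ₐ[R] A ⊗[R] A := includeLeft
  let ι₂ : A →ₐ[R] A ⊗[R] A := includeRight
  let ι : A ⊗[R] A →ₐ[R] A ⊗[R] (A ⊗[R] A) := includeRight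
  have comul_eq : toConv (ι.toLinearMap ∘ₗ comul) =
      toConv (ι.toLinearMap ∘ₗ ι₁.toLinearMap) * toConv (ι.toLinearMap ∘ₗ ι₂.toLinearMap) := by
    have on_tensors : ι.toLinearMap = LinearMap.mul' R _ ∘ₗ
        TensorProduct.map (ι.toLinearMap ∘ₗ ι₁.toLinearMap) (ι.toLinearMap ∘ₗ ι₂.toLinearMap) := by
      ext a b
      simp [ι, ι₁, ι₂]
    exact congrArg (fun f => toConv (f ∘ₗ comul)) on_tensors
  have mul_legs : TensorProduct.map (LinearMap.mul' R A) LinearMap.id ∘ₗ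
      (TensorProduct.tensorTensorTensorComm R A A A A).toLinearMap =
      LinearMap.mul' R (A ⊗[R] (A ⊗[R] A)) ∘ₗ
        TensorProduct.map (TensorProduct.map LinearMap.id ι₁.toLinearMap)
          (TensorProduct.map LinearMap.id ι₂.toLinearMap) := by
    ext a b c d
    simp [ι₁, ι₂]
  have product : toConv (TensorProduct.map (LinearMap.mul' R A) LinearMap.id ∘ₗ
        (TensorProduct.tensorTensorTensorComm R A A A A).toLinearMap ∘ₗ
        TensorProduct.map (adCoaction R A) (adCoaction R A) ∘ₗ comul) =
      toConv (TensorProduct.map LinearMap.id ι₁.toLinearMap ∘ₗ adCoaction R A) *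
        toConv (TensorProduct.map LinearMap.id ι₂.toLinearMap ∘ₗ adCoaction R A) := by
    rw [LinearMap.convMul_def, ← LinearMap.comp_assoc, mul_legs, TensorProduct.map_comp]
    rfl
  apply toConv_injective
  rw [product, toConv_map_id_comp_adCoaction, toConv_map_id_comp_adCoaction,
    toConv_map_id_comp_adCoaction]
  exact (congrArg _ comul_eq).trans
    (smul_mul' (N := WithConv (A →ₗ[R] A ⊗[R] (A ⊗[R] A))) (toConjAct (convUnit includeLeft)) _ _)

theorem rid_comp_map_id_counit_comp_adCoaction :
    (TensorProduct.rid R A).toLinearMap ∘ₗ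
        TensorProduct.map LinearMap.id counit ∘ₗ adCoaction R A =
      Algebra.linearMap R A ∘ₗ counit := by
  have conj_one : TensorProduct.map LinearMap.id counit ∘ₗ adCoaction R A =
      (includeRight : R →ₐ[R] A ⊗[R] R).toLinearMap ∘ₗ counit := by
    have one_eq : toConv ((includeRight : R →ₐ[R] A ⊗[R] R).toLinearMap ∘ₗ counit) = 1 :=
      (convPostcomp (D := A) (includeRight : R →ₐ[R] A ⊗[R] R)).map_one
    refine toConv_injective ((toConv_map_id_comp_adCoaction counit).trans ?_)
    rw [one_eq, smul_one]
  rw [conj_one]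
  ext a
  simp [Algebra.algebraMap_eq_smul_one]

theorem lid_comp_map_counit_id_comp_adCoaction :
    (TensorProduct.lid R A).toLinearMap ∘ₗ
        TensorProduct.map counit LinearMap.id ∘ₗ adCoaction R A = LinearMap.id := by
  have unit_eq :
      convUnit ((includeLeft : R →ₐ[R] R ⊗[R] A).comp (Bialgebra.counitAlgHom R A)) = 1 :=
    Units.ext (convPostcomp (D := A) (includeLeft : R →ₐ[R] R ⊗[R] A)).map_one
  have trivial_conj : TensorProduct.map counit LinearMap.id ∘ₗ adCoaction R A =
      (includeRight : A →ₐ[R] R ⊗[R] A).toLinearMap := by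
    refine toConv_injective
      ((toConv_map_comp_adCoaction (Bialgebra.counitAlgHom R A) LinearMap.id).trans ?_)
    rw [unit_eq, toConjAct_one, one_smul, LinearMap.comp_id]
  rw [trivial_conj]
  ext a
  simp

theorem adCoaction_comp_bialgHom {A' : Type*} [Semiring A'] [HopfAlgebra R A'] (f : A →ₐc[R] A') :
    adCoaction R A' ∘ₗ (f : A →ₗ[R] A') =
      TensorProduct.map (f : A →ₗ[R] A') (f : A →ₗ[R] A') ∘ₗ adCoaction R A := by
  let precomp := convPrecomp (B := A' ⊗[R] A') (f : A →ₗc[R] A')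
  have unit_comp : Units.map precomp (convUnit includeLeft) =
      convUnit ((includeLeft : A' →ₐ[R] A' ⊗[R] A').comp (f : A →ₐ[R] A')) := Units.ext rfl
  refine toConv_injective (.trans ?_ (toConv_map_comp_adCoaction (f : A →ₐ[R] A') _).symm)
  rw [← unit_comp]
  refine (congrArg precomp toConv_adCoaction).trans ?_
  simp only [units_smul_def, map_mul, ofConjAct_toConjAct, Units.coe_map, Units.coe_map_inv]
  rfl

end AdjointCoaction

section Untwist

variable {k H : Type*} [Field k] [AddCommGroup H] [Module k H]

namespace HomAlg

variable (P : HomAlg k H)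

theorem str_symm_mul (a b : H) :
    P.str.symm (P.mul a b) = P.mul (P.str.symm a) (P.str.symm b) :=
  P.str.injective (by simp only [P.str_mul, LinearEquiv.apply_symm_apply])

theorem str_symm_one : P.str.symm P.one = P.one :=
  (LinearEquiv.symm_apply_eq _).2 P.str_one.symm

/-- The associative product `α⁻¹(ab)` underlying a monoidal Hom-algebra. -/
def untwistedMul : H →ₗ[k] H →ₗ[k] H := P.mul.compr₂ P.str.symm.toLinearMap

theorem untwistedMul_apply (a b : H) : P.untwistedMul a b = P.str.symm (P.mul a b) := rfl

theorem untwistedMul_assoc (a b c : H) :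
    P.untwistedMul (P.untwistedMul a b) c = P.untwistedMul a (P.untwistedMul b c) := by
  simpa only [untwistedMul_apply, str_symm_mul, LinearEquiv.symm_apply_apply] using
    (congrArg (fun x => P.str.symm (P.str.symm x)) (P.hom_assoc a b c)).symm

theorem untwistedMul_one (a : H) : P.untwistedMul a P.one = a := by
  rw [untwistedMul_apply, P.mul_one, LinearEquiv.symm_apply_apply]

theorem one_untwistedMul (a : H) : P.untwistedMul P.one a = a := by
  rw [untwistedMul_apply, P.one_mul, LinearEquiv.symm_apply_apply]

end HomAlg

namespace HomCoalg

variable (P : HomCoalg k H)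

theorem comul_str_symm (c : H) :
    P.comul (P.str.symm c) =
      TensorProduct.map P.str.symm.toLinearMap P.str.symm.toLinearMap (P.comul c) := by
  obtain ⟨c, rfl⟩ := P.str.surjective c
  simp [P.comul_str, TensorProduct.map_map]

theorem counit_str_symm (c : H) : P.counit (P.str.symm c) = P.counit c := by
  rw [← P.counit_str, LinearEquiv.apply_symm_apply]

/-- The coassociative coproduct `c ↦ Δ(λ(c))` underlying a monoidal Hom-coalgebra. -/
def untwistedComul : H →ₗ[k] H ⊗[k] H := P.comul ∘ₗ P.str.toLinearMap

theorem untwistedComul_apply (c : H) :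
    P.untwistedComul c = TensorProduct.map P.str.toLinearMap P.str.toLinearMap (P.comul c) :=
  P.comul_str c

theorem comul_eq_map_untwistedComul :
    P.comul = TensorProduct.map P.str.symm.toLinearMap P.str.symm.toLinearMap ∘ₗ
      P.untwistedComul := by
  ext c
  simp [untwistedComul, ← comul_str_symm]

theorem untwistedComul_coassoc :
    (TensorProduct.assoc k H H H).toLinearMap ∘ₗ P.untwistedComul.rTensor H ∘ₗ P.untwistedComul =
      P.untwistedComul.lTensor H ∘ₗ P.untwistedComul := by
  ext c
  have key := P.hom_coassoc (P.str (P.str c))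
  rw [P.comul_str (P.str c), TensorProduct.map_map, TensorProduct.map_map,
    LinearEquiv.symm_comp] at key
  exact key.symm

theorem untwistedComul_counit_right (c : H) :
    TensorProduct.map LinearMap.id P.counit (P.untwistedComul c) = c ⊗ₜ[k] 1 := by
  apply (TensorProduct.rid k H).injective
  simpa [untwistedComul] using P.counit_comul_right (P.str c)

theorem untwistedComul_counit_left (c : H) :
    TensorProduct.map P.counit LinearMap.id (P.untwistedComul c) = 1 ⊗ₜ[k] c := by
  apply (TensorProduct.lid k H).injective
  simpa [untwistedComul] using P.counit_comul_left (P.str c)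

end HomCoalg

namespace HomBialg

variable (P : HomBialg k H)

theorem counit_untwistedMul (a b : H) :
    P.counit (P.untwistedMul a b) = P.counit a * P.counit b :=
  (P.counit_str_symm _).trans (P.counit_mul a b)

theorem untwistedComul_one : P.untwistedComul P.one = P.one ⊗ₜ[k] P.one :=
  (congrArg P.comul P.str_one).trans P.comul_one

theorem untwistedComul_untwistedMul (a b : H) :
    P.untwistedComul (P.untwistedMul a b) =
      TensorProduct.map (TensorProduct.lift P.untwistedMul) (TensorProduct.lift P.untwistedMul)
        (TensorProduct.tensorTensorTensorComm k H H H H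
          (P.untwistedComul a ⊗ₜ[k] P.untwistedComul b)) := by
  have on_tensors : TensorProduct.map (TensorProduct.lift P.untwistedMul)
        (TensorProduct.lift P.untwistedMul) ∘ₗ
      (TensorProduct.tensorTensorTensorComm k H H H H).toLinearMap ∘ₗ
      TensorProduct.map (TensorProduct.map P.str.toLinearMap P.str.toLinearMap)
        (TensorProduct.map P.str.toLinearMap P.str.toLinearMap) =
      TensorProduct.map (TensorProduct.lift P.mul) (TensorProduct.lift P.mul) ∘ₗ
        (TensorProduct.tensorTensorTensorComm k H H H H).toLinearMap := by
    ext a b c d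
    simp [HomAlg.untwistedMul_apply, HomAlg.str_symm_mul]
  have untwist_mul : P.str (P.untwistedMul a b) = P.mul a b := P.str.apply_symm_apply _
  rw [HomCoalg.untwistedComul_apply P.toHomCoalg a, HomCoalg.untwistedComul_apply P.toHomCoalg b]
  refine Eq.trans ?_ (LinearMap.congr_fun on_tensors (P.comul a ⊗ₜ P.comul b)).symm
  exact (congrArg P.comul untwist_mul).trans (P.comul_mul a b)

end HomBialg

namespace HomHopf

/-- The ordinary Hopf algebra with product `β⁻¹(ab)`, coproduct `Δ(β(h))` and the same unit,
counit and antipode as `P`. It is a type synonym of `H`. -/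
def Untwist (_P : HomHopf k H) : Type _ := H

variable (P : HomHopf k H)

instance : AddCommGroup P.Untwist := inferInstanceAs (AddCommGroup H)

instance : Module k P.Untwist := inferInstanceAs (Module k H)

noncomputable instance : Ring P.Untwist where
  __ := (inferInstance : AddCommGroup P.Untwist)
  mul a b := P.untwistedMul a b
  one := P.one
  mul_assoc := P.untwistedMul_assoc
  one_mul := P.one_untwistedMul
  mul_one := P.untwistedMul_one
  left_distrib a b c := (P.untwistedMul a).map_add b c
  right_distrib := P.untwistedMul.map_add₂
  zero_mul := P.untwistedMul.map_zero₂
  mul_zero a := (P.untwistedMul a).map_zero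

noncomputable instance : Algebra k P.Untwist :=
  Algebra.ofModule (fun r a b => P.untwistedMul.map_smul₂ r a b)
    fun r a b => (P.untwistedMul a).map_smul r b

noncomputable instance : Coalgebra k P.Untwist where
  comul := P.untwistedComul
  counit := P.counit
  coassoc := P.untwistedComul_coassoc
  rTensor_counit_comp_comul := LinearMap.ext P.untwistedComul_counit_left
  lTensor_counit_comp_comul := LinearMap.ext P.untwistedComul_counit_right

noncomputable instance : Bialgebra k P.Untwist :=
  Bialgebra.mk' k P.Untwist P.counit_one (P.counit_untwistedMul _ _) P.untwistedComul_one <| by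
    intro a b
    refine (P.untwistedComul_untwistedMul a b).trans ?_
    exact (LinearMap.congr_fun
      (LinearMap.mul'_tensor (R := k) (A := P.Untwist) (B := P.Untwist)) _).symm

theorem mul_S_untwistedComul (h : H) :
    TensorProduct.lift P.untwistedMul (TensorProduct.map LinearMap.id P.S (P.untwistedComul h)) =
      P.counit h • P.one := by
  rw [HomAlg.untwistedMul, TensorProduct.lift_compr₂]
  exact (congrArg P.str.symm (P.S_mul_right (P.str h))).trans <| by
    rw [map_smul, P.counit_str, P.str_symm_one]

theorem S_mul_untwistedComul (h : H) :
    TensorProduct.lift P.untwistedMul (TensorProduct.map P.S LinearMap.id (P.untwistedComul h)) =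
      P.counit h • P.one := by
  rw [HomAlg.untwistedMul, TensorProduct.lift_compr₂]
  exact (congrArg P.str.symm (P.S_mul_left (P.str h))).trans <| by
    rw [map_smul, P.counit_str, P.str_symm_one]

noncomputable instance : HopfAlgebra k P.Untwist where
  antipode := P.S
  mul_antipode_rTensor_comul := LinearMap.ext fun h =>
    (P.S_mul_untwistedComul h).trans (Algebra.algebraMap_eq_smul_one (A := P.Untwist) _).symm
  mul_antipode_lTensor_comul := LinearMap.ext fun h =>
    (P.mul_S_untwistedComul h).trans (Algebra.algebraMap_eq_smul_one (A := P.Untwist) _).symm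

theorem S_one : P.S P.one = P.one :=
  HopfAlgebra.antipode_one (R := k) (A := P.Untwist)

theorem S_mul (a b : H) : P.S (P.mul a b) = P.mul (P.S b) (P.S a) := by
  have untwisted : P.S (P.untwistedMul a b) = P.untwistedMul (P.S b) (P.S a) :=
    HopfAlgebra.antipode_mul_antidistrib (R := k) (A := P.Untwist) a b
  have twist := congrArg P.str untwisted
  rwa [P.S_str, HomAlg.untwistedMul_apply, HomAlg.untwistedMul_apply,
    LinearEquiv.apply_symm_apply, LinearEquiv.apply_symm_apply] at twist

/-- The adjoint coaction of the untwisted Hopf algebra, viewed on `H`. -/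
noncomputable def untwistedAdCoaction : H →ₗ[k] H ⊗[k] H := _root_.adCoaction k P.Untwist

theorem untwistedAdCoaction_eq :
    P.untwistedAdCoaction =
      TensorProduct.map (TensorProduct.lift P.untwistedMul ∘ₗ TensorProduct.map LinearMap.id P.S)
          LinearMap.id ∘ₗ
        (TensorProduct.assoc k H H H).symm.toLinearMap ∘ₗ
        TensorProduct.map LinearMap.id (TensorProduct.comm k H H).toLinearMap ∘ₗ
        TensorProduct.map LinearMap.id P.untwistedComul ∘ₗ P.untwistedComul := rfl

theorem untwistedAdCoaction_coassoc (h : H) :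
    TensorProduct.map LinearMap.id P.untwistedAdCoaction (P.untwistedAdCoaction h) =
      TensorProduct.assoc k H H H
        (TensorProduct.map P.untwistedComul LinearMap.id (P.untwistedAdCoaction h)) :=
  LinearMap.congr_fun (adCoaction_coassoc (R := k) (A := P.Untwist)) h

theorem map_id_comul_untwistedAdCoaction (h : H) :
    TensorProduct.map LinearMap.id P.untwistedComul (P.untwistedAdCoaction h) =
      TensorProduct.map (TensorProduct.lift P.untwistedMul) LinearMap.id
        (TensorProduct.tensorTensorTensorComm k H H H H
          (TensorProduct.map P.untwistedAdCoaction P.untwistedAdCoaction (P.untwistedComul h))) :=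
  LinearMap.congr_fun (map_id_comul_comp_adCoaction (R := k) (A := P.Untwist)) h

theorem map_id_counit_untwistedAdCoaction (h : H) :
    TensorProduct.rid k H (TensorProduct.map LinearMap.id P.counit (P.untwistedAdCoaction h)) =
      P.counit h • P.one :=
  (LinearMap.congr_fun
    (rid_comp_map_id_counit_comp_adCoaction (R := k) (A := P.Untwist)) h).trans
      (Algebra.algebraMap_eq_smul_one (R := k) (A := P.Untwist) _)

theorem map_counit_id_untwistedAdCoaction (h : H) :
    TensorProduct.lid k H (TensorProduct.map P.counit LinearMap.id (P.untwistedAdCoaction h)) = h :=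
  LinearMap.congr_fun (lid_comp_map_counit_id_comp_adCoaction (R := k) (A := P.Untwist)) h

end HomHopf

end Untwist

section Automorphisms

variable {k H : Type*} [Field k] [AddCommGroup H] [Module k H]

/-- `γ` is an automorphism of the monoidal Hom-bialgebra `B`. Compatibility with the structure map
follows from `β a = a 1`. -/
structure HomBialg.IsAut (B : HomBialg k H) (γ : H ≃ₗ[k] H) : Prop where
  map_mul : ∀ a b, γ (B.mul a b) = B.mul (γ a) (γ b)
  map_one : γ B.one = B.one
  comul_map : ∀ c, B.comul (γ c) = TensorProduct.map γ.toLinearMap γ.toLinearMap (B.comul c)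
  counit_map : ∀ c, B.counit (γ c) = B.counit c

namespace HomBialg.IsAut

variable {B : HomBialg k H} {γ δ : H ≃ₗ[k] H}

theorem map_str (hγ : B.IsAut γ) (a : H) : γ (B.str a) = B.str (γ a) := by
  rw [← B.mul_one, hγ.map_mul, hγ.map_one, B.mul_one]

theorem map_str_symm (hγ : B.IsAut γ) (a : H) : γ (B.str.symm a) = B.str.symm (γ a) := by
  rw [LinearEquiv.eq_symm_apply, ← hγ.map_str, LinearEquiv.apply_symm_apply]

theorem one : B.IsAut 1 where
  map_mul _ _ := rfl
  map_one := rfl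
  comul_map c := (LinearMap.congr_fun TensorProduct.map_id (B.comul c)).symm
  counit_map _ := rfl

theorem mul (hγ : B.IsAut γ) (hδ : B.IsAut δ) : B.IsAut (γ * δ) where
  map_mul a b := by simp only [LinearEquiv.mul_apply, hγ.map_mul, hδ.map_mul]
  map_one := by simp only [LinearEquiv.mul_apply, hγ.map_one, hδ.map_one]
  comul_map c := by
    rw [LinearEquiv.mul_apply, hγ.comul_map, hδ.comul_map, TensorProduct.map_map]
    rfl
  counit_map c := by simp only [LinearEquiv.mul_apply, hγ.counit_map, hδ.counit_map]

theorem symm (hγ : B.IsAut γ) : B.IsAut γ.symm where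
  map_mul a b := γ.symm_apply_eq.2 <| by
    simp only [hγ.map_mul, LinearEquiv.apply_symm_apply]
  map_one := γ.symm_apply_eq.2 hγ.map_one.symm
  comul_map c := by
    obtain ⟨c, rfl⟩ := γ.surjective c
    simp [hγ.comul_map, TensorProduct.map_map]
  counit_map c := by rw [← hγ.counit_map, LinearEquiv.apply_symm_apply]

theorem str : B.IsAut B.str := ⟨B.str_mul, B.str_one, B.comul_str, B.counit_str⟩

theorem zpow (hγ : B.IsAut γ) (n : ℤ) : B.IsAut (γ ^ n) := by
  let automorphisms : Subgroup (H ≃ₗ[k] H) :=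
    { carrier := {γ | B.IsAut γ}
      mul_mem' := mul
      one_mem' := one
      inv_mem' := symm }
  exact automorphisms.zpow_mem hγ n

theorem comul_comp (hγ : B.IsAut γ) :
    B.comul ∘ₗ γ.toLinearMap =
      TensorProduct.map (γ.toLinearMap ∘ₗ B.str.symm.toLinearMap)
        (γ.toLinearMap ∘ₗ B.str.symm.toLinearMap) ∘ₗ B.untwistedComul := by
  rw [TensorProduct.map_comp, LinearMap.comp_assoc, ← B.comul_eq_map_untwistedComul]
  exact LinearMap.ext hγ.comul_map

theorem symm_comp_comm (hγ : B.IsAut γ) :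
    B.str.symm.toLinearMap ∘ₗ γ.toLinearMap = γ.toLinearMap ∘ₗ B.str.symm.toLinearMap :=
  LinearMap.ext fun a => (hγ.map_str_symm a).symm

end HomBialg.IsAut

namespace HomHopf

variable (P : HomHopf k H) {γ : H ≃ₗ[k] H}

theorem untwistedAdCoaction_comp_aut (hγ : P.IsAut γ) :
    P.untwistedAdCoaction ∘ₗ γ.toLinearMap =
      TensorProduct.map γ.toLinearMap γ.toLinearMap ∘ₗ P.untwistedAdCoaction := by
  have map_untwistedMul (a b : H) :
      γ (P.untwistedMul a b) = P.untwistedMul (γ a) (γ b) :=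
    (hγ.map_str_symm _).trans (congrArg P.str.symm (hγ.map_mul a b))
  have untwistedComul_map : TensorProduct.map γ.toLinearMap γ.toLinearMap ∘ₗ P.untwistedComul =
      P.untwistedComul ∘ₗ γ.toLinearMap := LinearMap.ext fun c =>
    (hγ.comul_map _).symm.trans (congrArg P.comul (hγ.map_str c))
  let algHom : P.Untwist →ₐ[k] P.Untwist :=
    AlgHom.ofLinearMap γ.toLinearMap hγ.map_one map_untwistedMul
  exact adCoaction_comp_bialgHom (R := k) (A := P.Untwist) <| BialgHom.ofAlgHom algHom
    (AlgHom.ext hγ.counit_map) (AlgHom.ext (LinearMap.congr_fun untwistedComul_map))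

/-- The coaction `h ↦ γ(h₁ S(β(h₂₂))) ⊗ β(h₂₁)`, that is the adjoint coaction of the untwisted Hopf
algebra followed by `γ ⊗ β⁻¹`. -/
noncomputable def adCoaction (γ : H ≃ₗ[k] H) : H →ₗ[k] H ⊗[k] H :=
  TensorProduct.map γ.toLinearMap P.str.symm.toLinearMap ∘ₗ P.untwistedAdCoaction

theorem adCoaction_comp_str_symm (γ : H ≃ₗ[k] H) :
    P.adCoaction γ ∘ₗ P.str.symm.toLinearMap =
      TensorProduct.map (γ.toLinearMap ∘ₗ P.str.symm.toLinearMap)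
        (P.str.symm.toLinearMap ∘ₗ P.str.symm.toLinearMap) ∘ₗ P.untwistedAdCoaction := by
  rw [adCoaction, LinearMap.comp_assoc, P.untwistedAdCoaction_comp_aut HomBialg.IsAut.str.symm,
    ← LinearMap.comp_assoc, TensorProduct.map_comp]

theorem adCoaction_coassoc (hγ : P.IsAut γ) (h : H) :
    TensorProduct.map P.str.symm.toLinearMap (P.adCoaction γ) (P.adCoaction γ h) =
      TensorProduct.assoc k H H H
        (TensorProduct.map P.comul P.str.symm.toLinearMap (P.adCoaction γ h)) := by
  let b := P.str.symm.toLinearMap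
  let g := γ.toLinearMap
  let ρ := P.untwistedAdCoaction
  calc TensorProduct.map b (P.adCoaction γ) (TensorProduct.map g b (ρ h))
      = TensorProduct.map (g ∘ₗ b) (TensorProduct.map (g ∘ₗ b) (b ∘ₗ b))
          (TensorProduct.map LinearMap.id ρ (ρ h)) := by
        rw [TensorProduct.map_map, TensorProduct.map_map, P.adCoaction_comp_str_symm,
          LinearMap.comp_id, hγ.symm_comp_comm]
    _ = TensorProduct.assoc k H H H
          (TensorProduct.map (TensorProduct.map (g ∘ₗ b) (g ∘ₗ b)) (b ∘ₗ b)
            (TensorProduct.map P.untwistedComul LinearMap.id (ρ h))) := by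
        rw [P.untwistedAdCoaction_coassoc, TensorProduct.map_map_assoc]
    _ = TensorProduct.assoc k H H H
          (TensorProduct.map P.comul b (TensorProduct.map g b (ρ h))) := by
        rw [TensorProduct.map_map, TensorProduct.map_map, hγ.comul_comp, LinearMap.comp_id]

theorem adCoaction_str (hγ : P.IsAut γ) (h : H) :
    P.adCoaction γ (P.str h) =
      TensorProduct.map P.str.toLinearMap P.str.toLinearMap (P.adCoaction γ h) := by
  have str_comm : γ.toLinearMap ∘ₗ P.str.toLinearMap = P.str.toLinearMap ∘ₗ γ.toLinearMap :=
    LinearMap.ext hγ.map_str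
  calc P.adCoaction γ (P.str h)
      = TensorProduct.map γ.toLinearMap P.str.symm.toLinearMap
          (TensorProduct.map P.str.toLinearMap P.str.toLinearMap (P.untwistedAdCoaction h)) :=
        congrArg _ (LinearMap.congr_fun (P.untwistedAdCoaction_comp_aut HomBialg.IsAut.str) h)
    _ = TensorProduct.map P.str.toLinearMap P.str.toLinearMap (P.adCoaction γ h) := by
        rw [adCoaction, LinearMap.comp_apply, TensorProduct.map_map, TensorProduct.map_map,
          str_comm, LinearEquiv.symm_comp, LinearEquiv.comp_symm]

theorem map_counit_id_adCoaction (hγ : P.IsAut γ) (h : H) :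
    TensorProduct.lid k H (TensorProduct.map P.counit LinearMap.id (P.adCoaction γ h)) =
      P.str.symm h := by
  have counit_comp : P.counit ∘ₗ γ.toLinearMap = P.counit := LinearMap.ext hγ.counit_map
  have lid_natural : (TensorProduct.lid k H).toLinearMap ∘ₗ
      TensorProduct.map P.counit P.str.symm.toLinearMap = P.str.symm.toLinearMap ∘ₗ
        (TensorProduct.lid k H).toLinearMap ∘ₗ TensorProduct.map P.counit LinearMap.id := by
    ext
    simp
  rw [adCoaction, LinearMap.comp_apply, TensorProduct.map_map, counit_comp, LinearMap.id_comp]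
  exact (LinearMap.congr_fun lid_natural _).trans
    (congrArg P.str.symm (P.map_counit_id_untwistedAdCoaction h))

theorem map_id_comul_adCoaction (hγ : P.IsAut γ) (h : H) :
    TensorProduct.map LinearMap.id P.comul (P.adCoaction γ h) =
      TensorProduct.map (TensorProduct.lift P.mul) LinearMap.id
        (TensorProduct.tensorTensorTensorComm k H H H H
          (TensorProduct.map (P.adCoaction γ) (P.adCoaction γ) (P.comul h))) := by
  let b := P.str.symm.toLinearMap
  let g := γ.toLinearMap
  let ρ := P.untwistedAdCoaction
  have on_tensors : TensorProduct.map g (TensorProduct.map (b ∘ₗ b) (b ∘ₗ b)) ∘ₗ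
        TensorProduct.map (TensorProduct.lift P.untwistedMul) LinearMap.id ∘ₗ
        (TensorProduct.tensorTensorTensorComm k H H H H).toLinearMap =
      TensorProduct.map (TensorProduct.lift P.mul) LinearMap.id ∘ₗ
        (TensorProduct.tensorTensorTensorComm k H H H H).toLinearMap ∘ₗ
        TensorProduct.map (TensorProduct.map (g ∘ₗ b) (b ∘ₗ b))
          (TensorProduct.map (g ∘ₗ b) (b ∘ₗ b)) := by
    ext w x y z
    simp [g, b, HomAlg.untwistedMul_apply, HomAlg.str_symm_mul, hγ.map_mul]
  calc TensorProduct.map LinearMap.id P.comul (TensorProduct.map g b (ρ h))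
      = TensorProduct.map g (TensorProduct.map (b ∘ₗ b) (b ∘ₗ b))
          (TensorProduct.map LinearMap.id P.untwistedComul (ρ h)) := by
        rw [TensorProduct.map_map, TensorProduct.map_map, HomBialg.IsAut.str.symm.comul_comp,
          LinearMap.id_comp, LinearMap.comp_id]
    _ = TensorProduct.map (TensorProduct.lift P.mul) LinearMap.id
          (TensorProduct.tensorTensorTensorComm k H H H H
            (TensorProduct.map (TensorProduct.map (g ∘ₗ b) (b ∘ₗ b))
              (TensorProduct.map (g ∘ₗ b) (b ∘ₗ b))
              (TensorProduct.map ρ ρ (P.untwistedComul h)))) := by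
        rw [P.map_id_comul_untwistedAdCoaction]
        exact LinearMap.congr_fun on_tensors _
    _ = TensorProduct.map (TensorProduct.lift P.mul) LinearMap.id
          (TensorProduct.tensorTensorTensorComm k H H H H
            (TensorProduct.map (P.adCoaction γ) (P.adCoaction γ) (P.comul h))) := by
        have comul_eq : P.comul h = TensorProduct.map b b (P.untwistedComul h) :=
          LinearMap.congr_fun P.comul_eq_map_untwistedComul h
        rw [comul_eq, TensorProduct.map_map, TensorProduct.map_map, P.adCoaction_comp_str_symm]

theorem map_id_counit_adCoaction (hγ : P.IsAut γ) (h : H) :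
    TensorProduct.rid k H (TensorProduct.map LinearMap.id P.counit (P.adCoaction γ h)) =
      P.counit h • P.one := by
  have counit_comp : P.counit ∘ₗ P.str.symm.toLinearMap = P.counit :=
    LinearMap.ext P.counit_str_symm
  have rid_natural : (TensorProduct.rid k H).toLinearMap ∘ₗ
      TensorProduct.map γ.toLinearMap P.counit = γ.toLinearMap ∘ₗ
        (TensorProduct.rid k H).toLinearMap ∘ₗ TensorProduct.map LinearMap.id P.counit := by
    ext
    simp
  rw [adCoaction, LinearMap.comp_apply, TensorProduct.map_map, counit_comp, LinearMap.id_comp]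
  refine (LinearMap.congr_fun rid_natural _).trans
    ((congrArg γ (P.map_id_counit_untwistedAdCoaction h)).trans ?_)
  rw [map_smul, hγ.map_one]

theorem isLeftHomComoduleCoalg_adCoaction (hγ : P.IsAut γ) :
    IsLeftHomComoduleCoalg P.toHomBialg P.toHomCoalg (P.adCoaction γ) :=
  ⟨⟨P.adCoaction_coassoc hγ, P.adCoaction_str hγ, P.map_counit_id_adCoaction hγ⟩,
    P.map_id_comul_adCoaction hγ, P.map_id_counit_adCoaction hγ⟩

end HomHopf

end Automorphisms

section Opposite

variable {k H : Type*} [Field k] [AddCommGroup H] [Module k H]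

namespace HomBialg

/-- The opposite monoidal Hom-bialgebra: the product is reversed, all else is unchanged. -/
def op (B : HomBialg k H) : HomBialg k H where
  __ := B.toHomCoalg
  mul := B.mul.flip
  one := B.one
  hom_assoc a b c := (B.hom_assoc c b a).symm
  mul_one := B.one_mul
  one_mul := B.mul_one
  str_mul a b := B.str_mul b a
  str_one := B.str_one
  comul_mul a b := by
    have on_tensors :
        TensorProduct.map (TensorProduct.lift B.mul.flip) (TensorProduct.lift B.mul.flip) ∘ₗ
          (TensorProduct.tensorTensorTensorComm k H H H H).toLinearMap ∘ₗ
          (TensorProduct.comm k (H ⊗[k] H) (H ⊗[k] H)).toLinearMap =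
        TensorProduct.map (TensorProduct.lift B.mul) (TensorProduct.lift B.mul) ∘ₗ
          (TensorProduct.tensorTensorTensorComm k H H H H).toLinearMap := by
      ext
      simp
    exact (B.comul_mul b a).trans (LinearMap.congr_fun on_tensors (B.comul b ⊗ₜ B.comul a)).symm
  comul_one := B.comul_one
  counit_mul a b := (B.counit_mul b a).trans (mul_comm _ _)
  counit_one := B.counit_one

theorem IsAut.op {B : HomBialg k H} {γ : H ≃ₗ[k] H} (hγ : B.IsAut γ) : B.op.IsAut γ where
  map_mul a b := hγ.map_mul b a
  map_one := hγ.map_one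
  comul_map := hγ.comul_map
  counit_map := hγ.counit_map

/-- `T` is a skew antipode of the monoidal Hom-bialgebra `B`, that is an antipode of `B.op`:
`h₂ T(h₁) = ε(h) 1 = T(h₂) h₁`. -/
structure IsSkewAntipode (B : HomBialg k H) (T : H →ₗ[k] H) : Prop where
  str_comm : ∀ h, B.str (T h) = T (B.str h)
  left : ∀ h, TensorProduct.lift B.mul.flip (TensorProduct.map T LinearMap.id (B.comul h)) =
    B.counit h • B.one
  right : ∀ h, TensorProduct.lift B.mul.flip (TensorProduct.map LinearMap.id T (B.comul h)) =
    B.counit h • B.one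

/-- The opposite of a monoidal Hom-bialgebra with a skew antipode, as a monoidal Hom-Hopf
algebra. -/
def opHopf (B : HomBialg k H) {T : H →ₗ[k] H} (hT : B.IsSkewAntipode T) : HomHopf k H where
  toHomBialg := B.op
  S := T
  S_str := hT.str_comm
  S_mul_left := hT.left
  S_mul_right := hT.right

/-- The coaction `h ↦ γ(β(T(h₂₂))) γ(h₁) ⊗ β(h₂₁)`. For `γ = βⁿ⁻¹` and `T = S⁻¹` the first leg is
`βⁿ(S⁻¹(h₂₂)) βⁿ⁻¹(h₁)`. -/
noncomputable def opCoaction (B : HomBialg k H) (T : H →ₗ[k] H) (γ : H ≃ₗ[k] H) :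
    H →ₗ[k] H ⊗[k] H :=
  TensorProduct.map
      (TensorProduct.lift B.mul ∘ₗ
        TensorProduct.map ((γ * B.str).toLinearMap ∘ₗ T) γ.toLinearMap ∘ₗ
        (TensorProduct.comm k H H).toLinearMap)
      B.str.toLinearMap ∘ₗ
    (TensorProduct.assoc k H H H).symm.toLinearMap ∘ₗ
    TensorProduct.map LinearMap.id (TensorProduct.comm k H H).toLinearMap ∘ₗ
    TensorProduct.map LinearMap.id B.comul ∘ₗ B.comul

theorem map_id_untwistedComul_untwistedComul (B : HomBialg k H) (h : H) :
    TensorProduct.map LinearMap.id B.untwistedComul (B.untwistedComul h) =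
      TensorProduct.map B.str.toLinearMap
        (TensorProduct.map (B.str * B.str).toLinearMap (B.str * B.str).toLinearMap)
        (TensorProduct.map LinearMap.id B.comul (B.comul h)) := by
  have untwistedComul_comp_str : B.untwistedComul ∘ₗ B.str.toLinearMap =
      TensorProduct.map (B.str * B.str).toLinearMap (B.str * B.str).toLinearMap ∘ₗ B.comul :=
    LinearMap.ext (IsAut.str.mul IsAut.str).comul_map
  rw [B.untwistedComul_apply, TensorProduct.map_map, TensorProduct.map_map,
    untwistedComul_comp_str, LinearMap.id_comp, LinearMap.comp_id]

theorem opCoaction_eq_adCoaction_opHopf {B : HomBialg k H} {T : H →ₗ[k] H}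
    (hT : B.IsSkewAntipode T) {γ : H ≃ₗ[k] H} (hγ : B.IsAut γ) :
    B.opCoaction T γ = (B.opHopf hT).adCoaction γ := by
  have on_tensors : TensorProduct.map γ.toLinearMap B.str.symm.toLinearMap ∘ₗ
      TensorProduct.map
        (TensorProduct.lift B.op.untwistedMul ∘ₗ TensorProduct.map LinearMap.id T)
        LinearMap.id ∘ₗ
      (TensorProduct.assoc k H H H).symm.toLinearMap ∘ₗ
      TensorProduct.map LinearMap.id (TensorProduct.comm k H H).toLinearMap ∘ₗ
      TensorProduct.map B.str.toLinearMap
        (TensorProduct.map (B.str * B.str).toLinearMap (B.str * B.str).toLinearMap) =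
      TensorProduct.map
        (TensorProduct.lift B.mul ∘ₗ
          TensorProduct.map ((γ * B.str).toLinearMap ∘ₗ T) γ.toLinearMap ∘ₗ
          (TensorProduct.comm k H H).toLinearMap)
        B.str.toLinearMap ∘ₗ
      (TensorProduct.assoc k H H H).symm.toLinearMap ∘ₗ
      TensorProduct.map LinearMap.id (TensorProduct.comm k H H).toLinearMap := by
    ext x y z
    have first_leg : γ (B.op.untwistedMul (B.str x) (T (B.str (B.str z)))) =
        B.mul (γ (B.str (T z))) (γ x) := by
      rw [← hT.str_comm, ← hT.str_comm, ← hγ.map_mul]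
      exact congrArg γ (B.op.str.symm_apply_eq.2 (B.str_mul _ _).symm)
    simp [first_leg]
  ext h : 1
  have at_comul := LinearMap.congr_fun on_tensors
    (TensorProduct.map LinearMap.id B.comul (B.comul h))
  simp only [LinearMap.comp_apply, ← map_id_untwistedComul_untwistedComul] at at_comul
  rw [HomHopf.adCoaction, HomHopf.untwistedAdCoaction_eq]
  exact at_comul.symm

end HomBialg

theorem HomHopf.isSkewAntipode_of_inverse (P : HomHopf k H) {T : H →ₗ[k] H}
    (hTS : Function.LeftInverse T P.S) (hST : Function.RightInverse T P.S) :
    P.IsSkewAntipode T where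
  str_comm h := hTS.injective (by rw [← P.S_str, hST, hST])
  left h := by
    have on_tensors :
        P.S ∘ₗ TensorProduct.lift P.mul.flip ∘ₗ TensorProduct.map T LinearMap.id =
          TensorProduct.lift P.mul ∘ₗ TensorProduct.map LinearMap.id P.S := by
      ext x y
      simp [P.S_mul, hST x]
    apply hTS.injective
    rw [map_smul, P.S_one]
    exact (LinearMap.congr_fun on_tensors (P.comul h)).trans (P.S_mul_right h)
  right h := by
    have on_tensors :
        P.S ∘ₗ TensorProduct.lift P.mul.flip ∘ₗ TensorProduct.map LinearMap.id T =
          TensorProduct.lift P.mul ∘ₗ TensorProduct.map P.S LinearMap.id := by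
      ext x y
      simp [P.S_mul, hST y]
    apply hTS.injective
    rw [map_smul, P.S_one]
    exact (LinearMap.congr_fun on_tensors (P.comul h)).trans (P.S_mul_left h)

theorem coaction_makes_left_op_comodule_coalgebra_general (B : HomBialg k H) {T : H →ₗ[k] H}
    (hT : B.IsSkewAntipode T) {γ : H ≃ₗ[k] H} (hγ : B.IsAut γ) :
    IsLeftHomComoduleCoalg B.op B.toHomCoalg (B.opCoaction T γ) := by
  rw [HomBialg.opCoaction_eq_adCoaction_opHopf hT hγ]
  exact (B.opHopf hT).isLeftHomComoduleCoalg_adCoaction hγ.op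

end Opposite

/-- Let `(H, β)` be a monoidal Hom-Hopf algebra with bijective
antipode `S` and `n : ℤ`.  Then `H`, equipped with the coaction
`ρ(h) = βⁿ(S⁻¹(h₂₂)) · β^{n-1}(h₁) ⊗ β(h₂₁)` (product in `H`), is a left
`(H^op, β)`-Hom-comodule coalgebra, where `H^op` is `H` with the opposite
multiplication and unchanged unit, comultiplication, counit and structure map. -/
theorem coaction_makes_left_op_comodule_coalgebra
    {k : Type*} [Field k] {H : Type*} [AddCommGroup H] [Module k H]
    (HH : HomHopf k H) (Sinv : H →ₗ[k] H)
    (hS₁ : ∀ h, Sinv (HH.S h) = h) (hS₂ : ∀ h, HH.S (Sinv h) = h) (n : ℤ) :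
    ∃ HopB : HomBialg k H,
      HopB.mul = HH.mul.flip ∧ HopB.one = HH.one ∧
      HopB.comul = HH.comul ∧ HopB.counit = HH.counit ∧ HopB.str = HH.str ∧
      ∃ ρ : H →ₗ[k] H ⊗[k] H,
        (∀ h, ρ h
          = TensorProduct.map
              (TensorProduct.lift HH.mul ∘ₗ
                TensorProduct.map ((HH.str ^ n).toLinearMap ∘ₗ Sinv)
                  (HH.str ^ (n - 1)).toLinearMap ∘ₗ
                (TensorProduct.comm k H H).toLinearMap)
              HH.str.toLinearMap
              ((TensorProduct.assoc k H H H).symm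
                (TensorProduct.map LinearMap.id (TensorProduct.comm k H H).toLinearMap
                  (TensorProduct.map LinearMap.id HH.comul (HH.comul h))))) ∧
        IsLeftHomComoduleCoalg HopB HH.toHomCoalg ρ := by
  have hT : HH.IsSkewAntipode Sinv := HH.isSkewAntipode_of_inverse hS₁ hS₂
  have str_zpow : HH.str ^ n = HH.str ^ (n - 1) * HH.str := by
    rw [← zpow_add_one, sub_add_cancel]
  refine ⟨HH.op, rfl, rfl, rfl, rfl, rfl, HH.opCoaction Sinv (HH.str ^ (n - 1)), fun h => ?_,
    coaction_makes_left_op_comodule_coalgebra_general _ hT (HomBialg.IsAut.str.zpow (n - 1))⟩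
  rw [str_zpow]
  rfl
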